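/- Let p be a prime with p ≡ 1 (mod 4) and 2^{p−1} ≡ 1 (mod p^2), let q1 be a prime factor of p − 2 such that q1^{p−1} ≢ 1 (mod p^2), let n be a composite number, let d0 be the squarefree part of 4·q1^2 − p^n and c the positive integer with 4·q1^2 − p^n = c^2·d0. Then for any prime p4 dividing n, there are no integers u, v and sign ε ∈ {+1, −1} such that (u + v·√d0)^{p4} = ε·(2·q1 + c·√d0) in ℤ[√d0]. -/

import Mathlib

/-- `isOneTwoPowMod n M` decides `2 ^ n % M = 1`, keeping the intermediate powers small. -/
def isOneTwoPowMod (n M : ℕ) : Bool :=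
  ((Nat.mul (Nat.pow ((Nat.pow 2 256).mod M) (n.div 256)) (Nat.pow 2 (n.mod 256))).mod M).beq 1

theorem isOneTwoPowMod_of_mod_eq_one {n M : ℕ} (h : 2 ^ n % M = 1) : isOneTwoPowMod n M = true := by
  have : (2 ^ 256 % M) ^ (n / 256) * 2 ^ (n % 256) % M = 1 := by
    rw [Nat.mul_mod, ← Nat.pow_mod, ← Nat.mul_mod, ← pow_mul, ← pow_add, Nat.div_add_mod, h]
  exact Nat.beq_eq ▸ this

/-- `noWieferich n k` checks that `2 ^ (m - 1) % m ^ 2 ≠ 1` for the `k` numbers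
`m = n + 1, n + 5, n + 9, …`, apart from `1` and `1093`. -/
def noWieferich (n k : ℕ) : Bool :=
  Nat.rec true (fun k ih =>
    ((isOneTwoPowMod (Nat.add n (Nat.mul 4 k))
        (Nat.pow (Nat.succ (Nat.add n (Nat.mul 4 k))) 2)).not.or
      (((Nat.add n (Nat.mul 4 k)).beq 0).or ((Nat.add n (Nat.mul 4 k)).beq 1092))).and ih) k

theorem noWieferich_spec (n k : ℕ) (h : noWieferich n k = true) (i : ℕ) (hi : i < k)
    (h1 : 2 ^ (n + 4 * i) % (n + 4 * i + 1) ^ 2 = 1) : n + 4 * i = 0 ∨ n + 4 * i = 1092 := by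
  induction k with
  | zero => omega
  | succ k ih =>
    simp only [noWieferich, Bool.and_eq_true, Bool.or_eq_true, Bool.not_eq_true'] at h
    obtain ⟨h0, h2⟩ := h
    rcases Nat.lt_succ_iff_lt_or_eq.mp hi with hi | rfl
    · exact ih h2 hi
    · rcases h0 with h0 | h0
      · exact absurd (isOneTwoPowMod_of_mod_eq_one h1) (Bool.not_eq_true _ ▸ h0)
      · exact h0.imp Nat.eq_of_beq_eq_true Nat.eq_of_beq_eq_true

theorem all_noWieferich : ∀ i < 256, noWieferich (2048 * i) 512 = true := by
  decide +kernel

theorem eq_1093_of_wieferich {p : ℕ} (hp : p % 4 = 1) (hp1 : p ≠ 1) (hlt : p < 524288)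
    (hw : 2 ^ (p - 1) % p ^ 2 = 1) : p = 1093 := by
  have h := noWieferich_spec (2048 * (p / 2048)) 512 (all_noWieferich _ (by omega))
    (p % 2048 / 4) (by omega)
  rw [show 2048 * (p / 2048) + 4 * (p % 2048 / 4) = p - 1 by omega,
    show p - 1 + 1 = p by omega] at h
  have := h hw
  omega

section

open Matrix Polynomial

theorem coeff_prod_sum_of_natDegree_le {R ι : Type*} [CommRing R] (s : Finset ι) (f : ι → R[X])
    (d : ι → ℕ) (h : ∀ i ∈ s, (f i).natDegree ≤ d i) :
    (∏ i ∈ s, f i).coeff (∑ i ∈ s, d i) = ∏ i ∈ s, (f i).coeff (d i) := by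
  classical
  induction s using Finset.induction_on with
  | empty => simp
  | insert a s ha ih =>
    rw [Finset.prod_insert ha, Finset.sum_insert ha, Finset.prod_insert ha,
      coeff_mul_add_eq_of_natDegree_le (h a (by simp)), ih fun i hi => h i (by simp [hi])]
    exact (natDegree_prod_le s f).trans
      (Finset.sum_le_sum fun i hi => h i (by simp [hi]))

theorem coeff_det_sum_of_natDegree_le {R ι : Type*} [CommRing R] [Fintype ι] [DecidableEq ι]
    (D : Matrix ι ι R[X]) (d : ι → ℕ) (h : ∀ i j, (D i j).natDegree ≤ d j) :
    D.det.coeff (∑ j, d j) = (of fun i j => (D i j).coeff (d j)).det := by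
  simp only [det_apply, finsetSum_coeff, coeff_smul, of_apply]
  refine Finset.sum_congr rfl fun σ _ => ?_
  rw [coeff_prod_sum_of_natDegree_le _ _ _ fun i _ => h _ i]

theorem natDegree_det_le_sum {R ι : Type*} [CommRing R] [Fintype ι] [DecidableEq ι]
    (D : Matrix ι ι R[X]) (d : ι → ℕ) (h : ∀ i j, (D i j).natDegree ≤ d j) :
    D.det.natDegree ≤ ∑ j, d j := by
  rw [det_apply]
  refine natDegree_sum_le_of_forall_le _ _ fun σ _ => (natDegree_smul_le _ _).trans ?_
  exact (natDegree_prod_le _ _).trans (Finset.sum_le_sum fun i _ => h _ i)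

/-- A nonzero polynomial in `X`, of degree less than `K`, and `Y`, of degree less than `L`, cannot
vanish at all the points `(M * r + c s, γ ^ r)`. -/
theorem eq_zero_of_vanish_on_grid {F : Type*} [Field F] (K L R S : ℕ) (γ M : F) (hγ0 : γ ≠ 0)
    (hγ : Function.Injective fun l : Fin L => γ ^ (l : ℕ)) (c : Fin S → F)
    (hx : Function.Injective fun t : Fin R × Fin S => M * (t.1 : ℕ) + c t.2)
    (hRS : L * K < R * S + L) (P : Fin K × Fin L → F)
    (hP : ∀ r < L + R, ∀ s : Fin S,
      ∑ t : Fin K × Fin L, P t * ((M * (r : ℕ) + c s) ^ (t.1 : ℕ) * γ ^ (r * (t.2 : ℕ))) = 0) :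
    P = 0 := by
  classical
  by_contra hne
  let p : Fin L → F[X] := fun l => ∑ k : Fin K, Polynomial.C (P (k, l)) * X ^ (k : ℕ)
  have hpdeg (l : Fin L) : (p l).natDegree ≤ K - 1 :=
    natDegree_sum_le_of_forall_le _ _ fun k _ =>
      (natDegree_C_mul_X_pow_le _ _).trans (by omega)
  have hpcoeff (k : Fin K) (l : Fin L) : (p l).coeff k = P (k, l) := by
    simp only [p, finsetSum_coeff, coeff_C_mul, coeff_X_pow]
    rw [Finset.sum_eq_single k] <;> simp +contextual [Fin.ext_iff, eq_comm]
  let I := {l : Fin L // p l ≠ 0}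
  let n := Fintype.card I
  let e : Fin n ≃ I := (Fintype.equivFin I).symm
  have hnL : n ≤ L := (Fintype.card_subtype_le _).trans_eq (Fintype.card_fin L)
  have hn : 0 < n := by
    obtain ⟨⟨k, l⟩, hkl⟩ := Function.ne_iff.mp hne
    refine Fintype.card_pos_iff.mpr ⟨⟨l, fun h => hkl ?_⟩⟩
    rw [← hpcoeff, h]; simp
  let D : Matrix (Fin n) (Fin n) F[X] := of fun i j =>
    Polynomial.C (γ ^ ((i : ℕ) * ((e j).1 : ℕ))) *
      (p (e j).1).comp (X + Polynomial.C (M * ((i : ℕ) : F)))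
  have hD (i j) : (D i j).natDegree ≤ (p (e j).1).natDegree := by
    have h : ((p (e j).1).comp (X + Polynomial.C (M * ((i : ℕ) : F)))).natDegree =
        (p (e j).1).natDegree := by
      rw [natDegree_comp, natDegree_X_add_C, mul_one]
    exact (natDegree_C_mul_le _ _).trans_eq h
  have hdet : D.det ≠ 0 := by
    intro h0
    have h1 := coeff_det_sum_of_natDegree_le D _ hD
    rw [h0, coeff_zero] at h1
    have h2 : (of fun i j => (D i j).coeff (p (e j).1).natDegree) =
        of fun i j => (p (e j).1).leadingCoeff *
          (vandermonde fun j => γ ^ ((e j).1 : ℕ))ᵀ i j := by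
      ext i j
      have h3 := coeff_comp_degree_mul_degree (p := p (e j).1)
        (q := X + Polynomial.C (M * ((i : ℕ) : F)))
        (by rw [natDegree_X_add_C]; exact one_ne_zero)
      rw [natDegree_X_add_C, mul_one] at h3
      simp only [D, of_apply, coeff_C_mul, h3, leadingCoeff_X_add_C, one_pow, mul_one,
        transpose_apply, vandermonde_apply]
      rw [← pow_mul, mul_comm, mul_comm (i : ℕ)]
    rw [h2, det_mul_row, det_transpose, eq_comm, mul_eq_zero, Finset.prod_eq_zero_iff] at h1
    rcases h1 with ⟨j, _, hj⟩ | h1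
    · exact (e j).2 (leadingCoeff_eq_zero.mp hj)
    · refine det_vandermonde_ne_zero_iff.mpr (fun i j hij => ?_) h1
      exact e.injective (Subtype.ext (hγ hij))
  refine hdet (eq_zero_of_natDegree_lt_card_of_eval_eq_zero _ hx (fun t => ?_) ?_)
  · set x := M * (t.1 : ℕ) + c t.2 with hxdef
    rw [← coe_evalRingHom, RingHom.map_det]
    refine exists_mulVec_eq_zero_iff.mp ⟨fun j => γ ^ ((t.1 : ℕ) * ((e j).1 : ℕ)), ?_, ?_⟩
    · intro h
      exact pow_ne_zero _ hγ0 (congrFun h ⟨0, hn⟩)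
    · ext i
      have h1 := hP (i + t.1) (by omega) t.2
      rw [Fintype.sum_prod_type_right] at h1
      have h2 (l : Fin L) : ∑ k : Fin K, P (k, l) * ((M * ((i + t.1 : ℕ) : F) + c t.2) ^ (k : ℕ) *
          γ ^ ((i + t.1 : ℕ) * (l : ℕ))) =
          γ ^ ((i : ℕ) * (l : ℕ)) * (p l).eval (x + M * ((i : ℕ) : F)) *
            γ ^ ((t.1 : ℕ) * (l : ℕ)) := by
        simp only [p, eval_finsetSum, eval_mul, eval_C, eval_pow, eval_X, Finset.mul_sum,
          Finset.sum_mul]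
        refine Finset.sum_congr rfl fun k _ => ?_
        rw [hxdef, add_mul, pow_add]
        push_cast
        ring
      simp only [h2] at h1
      simp only [mulVec, dotProduct, RingHom.mapMatrix_apply, map_apply, D, of_apply,
        coe_evalRingHom, eval_mul, eval_C, eval_comp, eval_add, eval_X, Pi.zero_apply]
      rw [← h1, e.sum_comp fun l : I => γ ^ ((i : ℕ) * (l.1 : ℕ)) *
        (p l.1).eval (x + M * ((i : ℕ) : F)) * γ ^ ((t.1 : ℕ) * (l.1 : ℕ))]
      rw [← Fintype.sum_subtype_add_sum_subtype fun l : Fin L => p l ≠ 0, left_eq_add]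
      refine Finset.sum_eq_zero fun l _ => ?_
      rw [not_not.mp l.2, eval_zero, mul_zero, zero_mul]
  · refine (natDegree_det_le_sum D _ hD).trans_lt ?_
    have h1 : ∑ j, (p (e j).1).natDegree ≤ n * (K - 1) := by
      simpa using Finset.sum_le_card_nsmul Finset.univ (fun j => (p (e j).1).natDegree) (K - 1)
        fun j _ => hpdeg _
    have h2 : n * (K - 1) ≤ L * (K - 1) := Nat.mul_le_mul_right _ hnL
    have h3 : L * (K - 1) + L = L * K ∨ K = 0 := by
      rcases K with _ | K
      · simp
      · left; simp; ring
    simp only [Fintype.card_prod, Fintype.card_fin]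
    rcases h3 with h3 | h3
    · omega
    · subst h3
      exact absurd (Subsingleton.elim P 0) hne

/-- A matrix with linearly independent columns has a nonzero maximal minor. -/
theorem exists_det_submatrix_ne_zero {F ι κ : Type*} [Field F] [Fintype ι] [Fintype κ]
    [DecidableEq κ] (A : Matrix ι κ F) (hA : ∀ v, A *ᵥ v = 0 → v = 0) :
    ∃ f : κ → ι, (A.submatrix f id).det ≠ 0 := by
  have hrank : A.rank = Fintype.card κ := by
    rw [Matrix.rank, LinearMap.finrank_range_of_inj, Module.finrank_fintype_fun_eq_card]
    exact (injective_iff_map_eq_zero A.mulVecLin).mpr hA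
  have htop : Submodule.span F (Set.range A.row) = ⊤ := by
    apply Submodule.eq_top_of_finrank_eq
    rw [← rank_eq_finrank_span_row, hrank, Module.finrank_fintype_fun_eq_card]
  obtain ⟨b, hb, hspan, hli⟩ := exists_linearIndependent F (Set.range A.row)
  let B : Module.Basis b F (κ → F) := .mk hli (by simp [hspan, htop])
  let e : κ ≃ b := (Pi.basisFun F κ).indexEquiv B
  choose f hf using fun k => hb (e k).2
  refine ⟨f, fun h0 => ?_⟩
  have h1 : LinearIndependent F (A.submatrix f id).row := by
    rw [show (A.submatrix f id).row = Subtype.val ∘ e from funext hf]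
    exact hli.comp e e.injective
  rw [linearIndependent_rows_iff_isUnit, isUnit_iff_isUnit_det, h0] at h1
  exact not_isUnit_zero h1

theorem exists_eq_sum_add_pow_mul {f : ℂ → ℂ} (hf : Differentiable ℂ f) (N : ℕ) :
    ∃ (c : ℕ → ℂ) (g : ℂ → ℂ), Differentiable ℂ g ∧
      ∀ x, f x = ∑ n ∈ Finset.range N, c n * x ^ n + x ^ N * g x := by
  induction N with
  | zero => exact ⟨0, f, hf, by simp⟩
  | succ N ih =>
    obtain ⟨c, g, hg, h⟩ := ih
    refine ⟨Function.update c N (g 0), dslope g 0, ?_, fun x => ?_⟩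
    · exact differentiableOn_univ.mp
        ((Complex.differentiableOn_dslope Filter.univ_mem).mpr hg.differentiableOn)
    · have h1 : g x = g 0 + x * dslope g 0 x := by
        have := sub_smul_dslope g 0 x
        rw [sub_zero, smul_eq_mul] at this
        rw [this]; ring
      rw [h, Finset.sum_range_succ, Function.update_self, h1, pow_succ]
      have h2 : ∑ n ∈ Finset.range N, Function.update c N (g 0) n * x ^ n =
          ∑ n ∈ Finset.range N, c n * x ^ n := Finset.sum_congr rfl fun n hn => by
        rw [Function.update_of_ne (Finset.mem_range.mp hn).ne]
      rw [h2]
      ring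

theorem differentiable_det {n : Type*} [Fintype n] [DecidableEq n] {A : ℂ → Matrix n n ℂ}
    (hA : ∀ i j, Differentiable ℂ fun w => A w i j) : Differentiable ℂ fun w => (A w).det := by
  simp only [det_apply]
  fun_prop

/-- Schwarz lemma for the determinant of a matrix `f j (z i)`, perturbed by a matrix `E`. -/
theorem norm_det_mul_pow_le {N : ℕ} {z : Fin N → ℂ} (hz : Function.Injective z)
    {f : Fin N → ℂ → ℂ} (hf : ∀ j, Differentiable ℂ (f j)) (E : Matrix (Fin N) (Fin N) ℂ)
    {ρ C : ℝ} (hρ : 1 ≤ ρ)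
    (hC : ∀ w : ℂ, ‖w‖ = ρ → ‖(of fun i j => f j (w * z i) + w ^ N * E i j).det‖ ≤ C) :
    ‖(of fun i j => f j (z i) + E i j).det‖ * ρ ^ (∑ n : Fin N, (n : ℕ)) ≤ C := by
  choose c g hg hfg using fun j => exists_eq_sum_add_pow_mul (hf j) N
  let V := vandermonde z
  have hV : IsUnit V.det := (det_vandermonde_ne_zero_iff.mpr hz).isUnit
  let H (w : ℂ) : Matrix (Fin N) (Fin N) ℂ := of fun i j => z i ^ N * g j (w * z i) + E i j
  let D (w : ℂ) : Matrix (Fin N) (Fin N) ℂ :=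
    (of fun (n j : Fin N) => c j n) + diagonal (fun n : Fin N => w ^ (N - n : ℕ)) * (V⁻¹ * H w)
  let G (w : ℂ) : ℂ := V.det * (D w).det
  have hG : Differentiable ℂ G := by
    refine (differentiable_const _).mul (differentiable_det fun i j => ?_)
    simp only [D, Matrix.add_apply, diagonal_mul, of_apply]
    simp only [mul_apply, H, of_apply]
    fun_prop
  have hM (w : ℂ) : (of fun i j => f j (w * z i) + w ^ N * E i j).det =
      G w * w ^ (∑ n : Fin N, (n : ℕ)) := by
    have h1 : (of fun i j => f j (w * z i) + w ^ N * E i j) =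
        V * (diagonal (fun n : Fin N => w ^ (n : ℕ)) * D w) := by
      have h2 : diagonal (fun n : Fin N => w ^ (n : ℕ)) *
          diagonal (fun n : Fin N => w ^ (N - n : ℕ)) =
          w ^ N • (1 : Matrix (Fin N) (Fin N) ℂ) := by
        rw [diagonal_mul_diagonal, smul_one_eq_diagonal]
        congr 1
        ext n
        rw [← pow_add, Nat.add_sub_cancel' n.2.le]
      simp only [D]
      rw [mul_add, ← mul_assoc _ _ (V⁻¹ * _), h2, Matrix.smul_mul, one_mul, mul_add, Matrix.mul_smul,
        mul_nonsing_inv_cancel_left _ _ hV]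
      ext i j
      rw [Matrix.add_apply, mul_apply]
      simp only [H, V, of_apply, Matrix.smul_apply, diagonal_mul, hfg, vandermonde_apply,
        smul_eq_mul, Finset.sum_range]
      rw [mul_add, ← add_assoc, mul_pow w, mul_assoc (w ^ N)]
      congr 2
      refine Finset.sum_congr rfl fun n _ => ?_
      rw [mul_pow]; ring
    rw [h1, det_mul, det_mul, det_diagonal, Finset.prod_pow_eq_pow_sum]
    ring
  have hρ0 : 0 < ρ := by linarith
  have hle : ‖G 1‖ ≤ C / ρ ^ (∑ n : Fin N, (n : ℕ)) := by
    refine Complex.norm_le_of_forall_mem_frontier_norm_le (Metric.isBounded_ball (x := 0) (r := ρ))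
      hG.diffContOnCl (fun w hw => ?_) ?_
    · rw [frontier_ball _ hρ0.ne', mem_sphere_zero_iff_norm] at hw
      rw [le_div_iff₀ (by positivity), ← hw, ← norm_pow, ← norm_mul, ← hM]
      exact hC w hw
    · rw [closure_ball _ hρ0.ne']
      simpa using hρ
  rw [le_div_iff₀ (by positivity)] at hle
  have h1 := hM 1
  simp only [one_mul, one_pow, mul_one] at h1
  rwa [h1]

theorem norm_det_le_factorial_mul_prod {ι : Type*} [Fintype ι] [DecidableEq ι]
    (A : Matrix ι ι ℂ) (b : ι → ℝ) (h : ∀ i j, ‖A i j‖ ≤ b j) :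
    ‖A.det‖ ≤ (Fintype.card ι).factorial * ∏ j, b j := by
  rw [det_apply, ← Fintype.card_perm, ← nsmul_eq_mul]
  refine (norm_sum_le _ _).trans (Finset.sum_le_card_nsmul _ _ _ fun σ _ => ?_)
  have h1 : ‖Equiv.Perm.sign σ • ∏ i, A (σ i) i‖ = ‖∏ i, A (σ i) i‖ := by
    rcases Int.units_eq_one_or (Equiv.Perm.sign σ) with hs | hs <;> simp [hs]
  rw [h1, norm_prod]
  exact Finset.prod_le_prod (fun _ _ => norm_nonneg _) fun i _ => h _ _

theorem norm_det_mul_pow_le_prod {ι : Type*} [Fintype ι] [DecidableEq ι] {z : ι → ℂ}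
    (hz : Function.Injective z) {f : ι → ℂ → ℂ} (hf : ∀ j, Differentiable ℂ (f j))
    (E : Matrix ι ι ℂ) {ρ : ℝ} (hρ : 1 ≤ ρ) {b : ι → ℝ}
    (hb : ∀ w : ℂ, ‖w‖ = ρ → ∀ i j, ‖f j (w * z i) + w ^ Fintype.card ι * E i j‖ ≤ b j) :
    ‖(of fun i j => f j (z i) + E i j).det‖ *
        ρ ^ (Fintype.card ι * (Fintype.card ι - 1) / 2) ≤
      (Fintype.card ι).factorial * ∏ j, b j := by
  let e := Fintype.equivFin ι
  have h := norm_det_mul_pow_le (hz.comp e.symm.injective) (f := f ∘ e.symm) (fun j => hf _)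
    (E.submatrix e.symm e.symm) hρ
    (C := (Fintype.card ι).factorial * ∏ j, b j) fun w hw => ?_
  · rw [← Finset.sum_range fun n => n, Finset.sum_range_id] at h
    rw [← det_submatrix_equiv_self e.symm]
    exact h
  · refine (norm_det_le_factorial_mul_prod _ (b ∘ e.symm) fun i j => hb w hw _ _).trans_eq ?_
    rw [Fintype.card_fin]
    congr 1
    exact e.symm.prod_comp b

theorem exp_nine_mul_pi_le : Real.exp (9 * Real.pi) ≤ 2 ^ 41 := by
  rw [← Real.exp_log (show (0 : ℝ) < 2 ^ 41 by positivity), Real.exp_le_exp, Real.log_pow]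
  have h1 := Real.pi_lt_d4
  have h2 := Real.log_two_gt_d9
  push_cast
  linarith

theorem norm_det_interpolation_le {T K R S₀ ℓ b : ℕ} {M : ℤ} {ψ η : ℝ} (hψ : |ψ| ≤ Real.pi / 2)
    (hM : 2 * ℓ * ψ = Real.pi * (M + η)) (hη : |η| ≤ 1) (hℓ : 0 < ℓ)
    (hb : 9 * ℓ * (R + 2 * S₀) ≤ 2 ^ b)
    (hK : (9 : ℝ) ^ (K * (2 * T + 1)) * (R * |η| * K) ≤ 1)
    (r s : Fin K × Fin (2 * T + 1) → ℕ) (hr : ∀ i, r i ≤ R) (hs : ∀ i, s i ≤ 2 * S₀)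
    (hinj : Function.Injective fun i => r i * ψ + ((s i : ℝ) - S₀) * Real.pi) :
    ‖(of fun i j : Fin K × Fin (2 * T + 1) =>
        ((M * r i + 2 * ℓ * ((s i : ℤ) - S₀) : ℤ) : ℂ) ^ (j.1 : ℕ) *
          Complex.exp (2 * ((j.2 : ℤ) - T : ℤ) * (r i * ψ) * Complex.I)).det‖ *
        9 ^ (K * (2 * T + 1) * (K * (2 * T + 1) - 1) / 2) ≤
      (K * (2 * T + 1)).factorial * ∏ j : Fin K × Fin (2 * T + 1),
        (2 * (2 ^ b) ^ (j.1 : ℕ) * (2 ^ (41 * (R + 2 * S₀))) ^ ((j.2 : ℤ) - T).natAbs : ℝ) := by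
  have hπ := Real.pi_pos
  have hℓ' : (0 : ℝ) < ℓ := by exact_mod_cast hℓ
  let z (i : Fin K × Fin (2 * T + 1)) : ℝ := r i * ψ + ((s i : ℝ) - S₀) * Real.pi
  let x (i : Fin K × Fin (2 * T + 1)) : ℤ := M * r i + 2 * ℓ * ((s i : ℤ) - S₀)
  let y (i : Fin K × Fin (2 * T + 1)) : ℝ := 2 * ℓ / Real.pi * z i
  let f (j : Fin K × Fin (2 * T + 1)) (ζ : ℂ) : ℂ :=
    ((2 * ℓ / Real.pi : ℝ) * ζ) ^ (j.1 : ℕ) *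
      Complex.exp (2 * ((j.2 : ℤ) - T : ℤ) * ζ * Complex.I)
  let E : Matrix (Fin K × Fin (2 * T + 1)) (Fin K × Fin (2 * T + 1)) ℂ := of fun i j =>
    ((x i ^ (j.1 : ℕ) - y i ^ (j.1 : ℕ) : ℝ) : ℂ) *
      Complex.exp (2 * ((j.2 : ℤ) - T : ℤ) * z i * Complex.I)
  have hyx (i) : y i = x i + r i * η := by
    simp only [y, x, z]
    field_simp
    push_cast
    linear_combination (r i : ℝ) * hM
  have hz (i) : |z i| ≤ Real.pi * (R + 2 * S₀) / 2 := by
    have h1 : (r i : ℝ) ≤ R := by exact_mod_cast hr i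
    have h2 : |(s i : ℝ) - S₀| ≤ S₀ := by
      have : (s i : ℝ) ≤ 2 * S₀ := by exact_mod_cast hs i
      rw [abs_le]
      constructor <;> linarith [(s i).cast_nonneg (α := ℝ)]
    calc |z i| ≤ |r i * ψ| + |((s i : ℝ) - S₀) * Real.pi| := abs_add_le _ _
      _ = r i * |ψ| + |(s i : ℝ) - S₀| * Real.pi := by
        rw [abs_mul, abs_mul, Nat.abs_cast, abs_of_pos hπ]
      _ ≤ R * (Real.pi / 2) + S₀ * Real.pi := by gcongr
      _ = _ := by ring
  have hb' : (9 * ℓ * (R + 2 * S₀) : ℝ) ≤ 2 ^ b := by exact_mod_cast hb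
  have hy (i) : |y i| ≤ ℓ * (R + 2 * S₀) := by
    calc |y i| = 2 * ℓ / Real.pi * |z i| := by
          rw [abs_mul, abs_of_nonneg (by positivity)]
      _ ≤ 2 * ℓ / Real.pi * (Real.pi * (R + 2 * S₀) / 2) := by gcongr; exact hz i
      _ = _ := by field_simp
  have hyb (i) : |y i| ≤ 2 ^ b := by
    refine (hy i).trans (le_trans ?_ hb')
    nlinarith [show (0 : ℝ) ≤ ℓ * (R + 2 * S₀) by positivity]
  have hxy (i) : |x i - y i| ≤ R * |η| := by
    rw [hyx, sub_add_cancel_left, abs_neg, abs_mul, Nat.abs_cast]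
    gcongr
    exact hr i
  have hxb (i) : |(x i : ℝ)| ≤ 2 ^ b := by
    have h1 : |(x i : ℝ)| ≤ |y i| + |x i - y i| := by
      have := abs_add_le (y i) (x i - y i)
      rwa [add_sub_cancel] at this
    have h2 : (1 : ℝ) ≤ ℓ := by exact_mod_cast hℓ
    have h3 : (R : ℝ) * |η| ≤ ℓ * (R + 2 * S₀) := by
      calc (R : ℝ) * |η| ≤ R * 1 := by gcongr
        _ ≤ 1 * (R + 2 * S₀) := by linarith [S₀.cast_nonneg (α := ℝ)]
        _ ≤ _ := by gcongr
    have h4 : (0 : ℝ) ≤ ℓ * (R + 2 * S₀) := by positivity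
    linarith [hy i, hxy i]
  have hE (i j) : (9 : ℝ) ^ (K * (2 * T + 1)) * ‖E i j‖ ≤ (2 ^ b) ^ (j.1 : ℕ) := by
    have h1 : ‖E i j‖ ≤ R * |η| * (K * (2 ^ b) ^ (j.1 : ℕ)) := by
      have h2 : ‖Complex.exp (2 * ((j.2 : ℤ) - T : ℤ) * z i * Complex.I)‖ = 1 := by
        rw [← Complex.norm_exp_ofReal_mul_I (2 * ((j.2 : ℤ) - T : ℤ) * z i)]
        push_cast
        rfl
      simp only [E, of_apply, norm_mul, h2, mul_one]
      rw [Complex.norm_real, Real.norm_eq_abs]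
      refine (abs_pow_sub_pow_le _ _ _).trans ?_
      rw [mul_assoc]
      refine mul_le_mul (hxy i) (mul_le_mul (by exact_mod_cast j.1.2.le) ?_ (by positivity)
        (by positivity)) (by positivity) (by positivity)
      exact (pow_le_pow_left₀ (by positivity) (max_le (hxb i) (hyb i)) _).trans
        (pow_le_pow_right₀ (one_le_pow₀ one_le_two) (by omega))
    calc (9 : ℝ) ^ (K * (2 * T + 1)) * ‖E i j‖
        ≤ 9 ^ (K * (2 * T + 1)) * (R * |η| * (K * (2 ^ b) ^ (j.1 : ℕ))) := by gcongr
      _ = 9 ^ (K * (2 * T + 1)) * (R * |η| * K) * (2 ^ b) ^ (j.1 : ℕ) := by ring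
      _ ≤ 1 * (2 ^ b) ^ (j.1 : ℕ) := by gcongr
      _ = _ := one_mul _
  have hf (w : ℂ) (hw : ‖w‖ = 9) (i j) : ‖f j (w * z i)‖ ≤
      (2 ^ b) ^ (j.1 : ℕ) * (2 ^ (41 * (R + 2 * S₀))) ^ ((j.2 : ℤ) - T).natAbs := by
    simp only [f, norm_mul, norm_pow, Complex.norm_exp]
    refine mul_le_mul (pow_le_pow_left₀ (by positivity) ?_ _) ?_ (Real.exp_pos _).le (by positivity)
    · rw [Complex.norm_real, Complex.norm_real, hw, Real.norm_eq_abs, Real.norm_eq_abs]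
      have h1 : |2 * (ℓ : ℝ) / Real.pi| * (9 * |z i|) = 9 * |y i| := by
        simp only [y, abs_mul]; ring
      rw [h1]
      linarith [hy i]
    · calc Real.exp (2 * ((j.2 : ℤ) - T : ℤ) * (w * z i) * Complex.I : ℂ).re
          ≤ Real.exp (9 * Real.pi * ((R + 2 * S₀) * ((j.2 : ℤ) - T).natAbs : ℕ)) := by
            refine Real.exp_le_exp.mpr ((Complex.re_le_norm _).trans ?_)
            rw [norm_mul, norm_mul, norm_mul, norm_mul, hw, Complex.norm_I, Complex.norm_real,
              Complex.norm_intCast, Real.norm_eq_abs, Complex.norm_ofNat]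
            push_cast
            have h1 : |((j.2 : ℝ) - T)| = ((((j.2 : ℤ) - T).natAbs : ℕ) : ℝ) := by
              rw [Nat.cast_natAbs]; push_cast; rfl
            rw [← h1]
            nlinarith [mul_le_mul_of_nonneg_left (hz i) (abs_nonneg ((j.2 : ℝ) - T))]
        _ = Real.exp (9 * Real.pi) ^ ((R + 2 * S₀) * ((j.2 : ℤ) - T).natAbs) := by
            rw [← Real.exp_nat_mul, mul_comm]
        _ ≤ (2 ^ 41) ^ ((R + 2 * S₀) * ((j.2 : ℤ) - T).natAbs) := by
            gcongr
            exact exp_nine_mul_pi_le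
        _ = _ := by rw [← pow_mul, ← pow_mul, mul_assoc]
  have hmain := norm_det_mul_pow_le_prod (z := fun i => (z i : ℂ))
    (fun i j hij => hinj (Complex.ofReal_injective hij)) (f := f)
    (fun j => by simp only [f]; fun_prop) E (ρ := 9) (by norm_num)
    (b := fun j => 2 * (2 ^ b) ^ (j.1 : ℕ) *
      (2 ^ (41 * (R + 2 * S₀))) ^ ((j.2 : ℤ) - T).natAbs) fun w hw i j => ?_
  · simp only [Fintype.card_prod, Fintype.card_fin] at hmain
    convert hmain using 5
    ext i j
    have h1 : Complex.exp (2 * ((j.2 : ℤ) - T : ℤ) * z i * Complex.I) =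
        Complex.exp (2 * ((j.2 : ℤ) - T : ℤ) * (r i * ψ) * Complex.I) := by
      rw [Complex.exp_eq_exp_iff_exists_int]
      refine ⟨((j.2 : ℤ) - T) * ((s i : ℤ) - S₀), ?_⟩
      simp only [z]
      push_cast
      ring
    simp only [of_apply, f, E, h1]
    push_cast
    simp only [y, x]
    push_cast
    ring
  · refine (norm_add_le _ _).trans ?_
    rw [norm_mul (w ^ _), norm_pow, hw, Fintype.card_prod, Fintype.card_fin, Fintype.card_fin]
    have h1 : (1 : ℝ) ≤ (2 ^ (41 * (R + 2 * S₀))) ^ ((j.2 : ℤ) - T).natAbs :=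
      one_le_pow₀ (one_le_pow₀ one_le_two)
    have h2 : (0 : ℝ) ≤ (2 ^ b) ^ (j.1 : ℕ) := by positivity
    nlinarith [hf w hw i j, hE i j]

theorem injective_mul_add_mul {R ℓ : ℕ} (hℓ : ℓ.Prime) {M : ℤ} (hM : ¬ (ℓ : ℤ) ∣ M) (hR : R ≤ ℓ)
    {r r' : ℕ} (hr : r < R) (hr' : r' < R) {s s' : ℤ}
    (h : M * r + 2 * ℓ * s = M * r' + 2 * ℓ * s') : r = r' ∧ s = s' := by
  have h1 : (ℓ : ℤ) ∣ M * (r - r') := ⟨2 * (s' - s), by linear_combination h⟩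
  have h2 : (ℓ : ℤ) ∣ r - r' :=
    ((Nat.prime_iff_prime_int.mp hℓ).dvd_or_dvd h1).resolve_left hM
  have h3 : (r : ℤ) - r' = 0 := Int.eq_zero_of_abs_lt_dvd h2 (by rw [abs_lt]; omega)
  have h4 : r = r' := by omega
  subst h4
  have h5 : (2 * ℓ : ℤ) ≠ 0 := by have := hℓ.pos; positivity
  exact ⟨rfl, mul_left_cancel₀ h5 (add_left_cancel h)⟩

theorem exists_interpolation_det_ne_zero {L K R S₀ ℓ : ℕ} {M : ℤ} {ψ η : ℝ} (hℓ : ℓ.Prime)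
    (hMℓ : ¬ (ℓ : ℤ) ∣ M) (hM : 2 * ℓ * ψ = Real.pi * (M + η)) (hR : L + R ≤ ℓ)
    (hη : (L + R : ℕ) * |η| < 1) (hLK : L * K < R * (2 * S₀ + 1) + L) :
    ∃ r s : Fin K × Fin L → ℕ, (∀ i, r i ≤ L + R) ∧ (∀ i, s i ≤ 2 * S₀) ∧
      (Function.Injective fun i => r i * ψ + ((s i : ℝ) - S₀) * Real.pi) ∧
      (of fun i j : Fin K × Fin L => ((M * r i + 2 * ℓ * ((s i : ℤ) - S₀) : ℤ) : ℂ) ^ (j.1 : ℕ) *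
        Complex.exp (2 * ψ * Complex.I) ^ (r i * (j.2 : ℕ))).det ≠ 0 := by
  have hπ := Real.pi_pos
  have hη' (k : ℕ) (hk : k ≤ L + R) : k * |η| < 1 :=
    (mul_le_mul_of_nonneg_right (by exact_mod_cast hk) (abs_nonneg η)).trans_lt hη
  let γ := Complex.exp (2 * ψ * Complex.I)
  have hγ : Function.Injective fun l : Fin L => γ ^ (l : ℕ) := by
    have key (a b : ℕ) (hb : b < L) (hab : γ ^ a = γ ^ b) (hlt : a < b) : False := by
      simp only [γ, ← Complex.exp_nat_mul] at hab
      obtain ⟨n, hn⟩ := Complex.exp_eq_exp_iff_exists_int.mp hab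
      have h1 : (a : ℝ) * ψ = b * ψ + n * Real.pi := by
        have : (2 * Complex.I) * (a * ψ : ℝ) = (2 * Complex.I) * (b * ψ + n * Real.pi : ℝ) := by
          push_cast; linear_combination hn
        exact_mod_cast mul_left_cancel₀ (by simp) this
      have h2 : ((b : ℝ) - a) * (M + η) = -(2 * ℓ * n) := by
        apply mul_left_cancel₀ hπ.ne'
        linear_combination -(2 * ℓ : ℝ) * h1 - ((b : ℝ) - a) * hM
      have h3 : ((b : ℤ) - a) * M + 2 * ℓ * n = 0 := by
        have h4 : |((((b : ℤ) - a) * M + 2 * ℓ * n : ℤ) : ℝ)| < 1 := by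
          have h5 : ((((b : ℤ) - a) * M + 2 * ℓ * n : ℤ) : ℝ) = -((b - a : ℕ) * η) := by
            rw [Nat.cast_sub hlt.le]; push_cast; linear_combination h2
          rw [h5, abs_neg, abs_mul, Nat.abs_cast]
          exact hη' _ (by omega)
        exact Int.abs_lt_one_iff.mp (by exact_mod_cast h4)
      have h4 := (injective_mul_add_mul (R := L + R) hℓ hMℓ hR (r := b) (r' := a) (s := n) (s' := 0)
        (by omega) (by omega) (by linear_combination h3)).1
      omega
    intro a b hab
    rcases lt_trichotomy (a : ℕ) b with h | h | h
    · exact (key a b b.2 hab h).elim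
    · exact Fin.ext h
    · exact (key b a a.2 hab.symm h).elim
  let A : Matrix (Fin (L + R) × Fin (2 * S₀ + 1)) (Fin K × Fin L) ℂ := of fun i j =>
    ((M * (i.1 : ℕ) + 2 * ℓ * (((i.2 : ℕ) : ℤ) - S₀) : ℤ) : ℂ) ^ (j.1 : ℕ) *
      γ ^ ((i.1 : ℕ) * (j.2 : ℕ))
  obtain ⟨f, hf⟩ := exists_det_submatrix_ne_zero A fun v hv => by
    refine eq_zero_of_vanish_on_grid K L R (2 * S₀ + 1) γ M (Complex.exp_ne_zero _) hγ
      (fun s => 2 * ℓ * ((s : ℕ) - S₀)) (fun t t' h => ?_) hLK v fun r hr s => ?_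
    · dsimp only at h
      have h1 : M * (t.1 : ℕ) + 2 * ℓ * (((t.2 : ℕ) : ℤ) - S₀) =
          M * (t'.1 : ℕ) + 2 * ℓ * (((t'.2 : ℕ) : ℤ) - S₀) := by exact_mod_cast h
      have h2 := injective_mul_add_mul (R := L + R) hℓ hMℓ hR (by omega) (by omega) h1
      exact Prod.ext (Fin.ext h2.1) (Fin.ext (by omega))
    · have h1 := congrFun hv (⟨r, hr⟩, s)
      simp only [mulVec, dotProduct, A, of_apply, Pi.zero_apply] at h1
      rw [← h1]
      refine Finset.sum_congr rfl fun t _ => ?_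
      push_cast
      ring
  have hfinj : Function.Injective f := fun i j hij => by
    by_contra hne
    exact hf (det_zero_of_row_eq hne (by ext k; simp [hij]))
  refine ⟨fun i => (f i).1, fun i => (f i).2, fun i => (f i).1.2.le, fun i =>
    Nat.lt_succ_iff.mp (f i).2.2,
    fun i j hij => ?_, hf⟩
  have h1 : ((((f i).1 : ℕ) : ℝ) - ((f j).1 : ℕ)) * (M + η) =
      -(2 * ℓ * ((((f i).2 : ℕ) : ℝ) - ((f j).2 : ℕ))) := by
    apply mul_left_cancel₀ hπ.ne'
    dsimp only at hij
    linear_combination 2 * ℓ * hij - ((((f i).1 : ℕ) : ℝ) - ((f j).1 : ℕ)) * hM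
  have h2 : M * ((f i).1 : ℕ) + 2 * ℓ * ((((f i).2 : ℕ) : ℤ)) -
      (M * ((f j).1 : ℕ) + 2 * ℓ * ((((f j).2 : ℕ) : ℤ))) = 0 := by
    rw [← Int.abs_lt_one_iff, ← Int.cast_lt (R := ℝ)]
    have h3 : ((M * ((f i).1 : ℕ) + 2 * ℓ * ((((f i).2 : ℕ) : ℤ)) -
      (M * ((f j).1 : ℕ) + 2 * ℓ * ((((f j).2 : ℕ) : ℤ))) : ℤ) : ℝ) =
        (((f j).1 : ℕ) - ((f i).1 : ℕ)) * η := by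
      push_cast; linear_combination h1
    rw [Int.cast_abs, h3, abs_mul, Int.cast_one]
    refine lt_of_le_of_lt (mul_le_mul_of_nonneg_right ?_ (abs_nonneg η)) hη
    rw [abs_le]
    have h4 : (((f i).1 : ℕ) : ℝ) ≤ (L + R : ℕ) := by exact_mod_cast (f i).1.2.le
    have h5 : (((f j).1 : ℕ) : ℝ) ≤ (L + R : ℕ) := by exact_mod_cast (f j).1.2.le
    constructor <;> linarith [Nat.cast_nonneg (α := ℝ) ((f i).1 : ℕ),
      Nat.cast_nonneg (α := ℝ) ((f j).1 : ℕ)]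
  have h3 := injective_mul_add_mul (R := L + R) hℓ hMℓ hR (by omega) (by omega) (sub_eq_zero.mp h2)
  exact hfinj (Prod.ext (Fin.ext h3.1) (Fin.ext (by exact_mod_cast h3.2)))

theorem Zsqrtd.exists_ringHom_complex {d : ℤ} (hd : d < 0) :
    ∃ φ : ℤ√d →+* ℂ, (∀ x, (φ x).re = x.re) ∧ (∀ x, φ (star x) = starRingEnd ℂ (φ x)) ∧
      ∀ x, Complex.normSq (φ x) = x.norm := by
  have hd' : (0 : ℝ) ≤ -d := by exact_mod_cast (neg_pos.mpr hd).le
  have hr : (Real.sqrt (-d) * Complex.I) * (Real.sqrt (-d) * Complex.I) = ((d : ℤ) : ℂ) := by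
    have h1 : ((Real.sqrt (-d) * Real.sqrt (-d) : ℝ) : ℂ) = (-d : ℝ) := by
      rw [Real.mul_self_sqrt hd']
    push_cast at h1
    linear_combination -h1 + (Real.sqrt (-d) : ℂ) ^ 2 * Complex.I_sq
  refine ⟨Zsqrtd.lift ⟨_, hr⟩, fun x => ?_, fun x => ?_, fun x => ?_⟩
  · simp [Zsqrtd.lift]
  · apply Complex.ext <;> simp [Zsqrtd.lift]
  · simp only [Zsqrtd.lift, Equiv.coe_fn_mk, RingHom.coe_mk, MonoidHom.coe_mk, OneHom.coe_mk,
      Complex.normSq_apply, Complex.add_re, Complex.add_im, Complex.mul_re, Complex.mul_im,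
      Complex.intCast_re, Complex.intCast_im, Complex.ofReal_re, Complex.ofReal_im,
      Complex.I_re, Complex.I_im, Zsqrtd.norm_def]
    push_cast
    linear_combination (x.im : ℝ) ^ 2 * Real.mul_self_sqrt hd'

theorem one_le_pow_mul_norm_det {d : ℤ} (φ : ℤ√d →+* ℂ)
    (hstar : ∀ x, φ (star x) = starRingEnd ℂ (φ x)) (hnorm : ∀ x, Complex.normSq (φ x) = x.norm)
    {α : ℤ√d} {a ψ : ℝ} (ha : 0 < a)
    (hα : φ α = Real.sqrt a * Complex.exp (ψ * Complex.I)) {T K : ℕ}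
    (X : Fin K × Fin (2 * T + 1) → ℤ) (r : Fin K × Fin (2 * T + 1) → ℕ)
    (h : (of fun i j : Fin K × Fin (2 * T + 1) => (X i : ℂ) ^ (j.1 : ℕ) *
        Complex.exp (2 * ψ * Complex.I) ^ (r i * (j.2 : ℕ))).det ≠ 0) :
    1 ≤ (∏ i, a ^ (T * r i)) * ‖(of fun i j : Fin K × Fin (2 * T + 1) => (X i : ℂ) ^ (j.1 : ℕ) *
          Complex.exp (2 * ((j.2 : ℤ) - T : ℤ) * (r i * ψ) * Complex.I)).det‖ := by
  set A := of fun i j : Fin K × Fin (2 * T + 1) => (X i : ℂ) ^ (j.1 : ℕ) *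
        Complex.exp (2 * ψ * Complex.I) ^ (r i * (j.2 : ℕ)) with hA
  set A' := of fun i j : Fin K × Fin (2 * T + 1) => (X i : ℂ) ^ (j.1 : ℕ) *
          Complex.exp (2 * ((j.2 : ℤ) - T : ℤ) * (r i * ψ) * Complex.I) with hA'
  let B : Matrix (Fin K × Fin (2 * T + 1)) (Fin K × Fin (2 * T + 1)) (ℤ√d) := of fun i j =>
    (X i : ℤ√d) ^ (j.1 : ℕ) * (α ^ ((j.2 : ℕ) * r i) * star α ^ ((2 * T - (j.2 : ℕ)) * r i))
  have hsα : φ (star α) = Real.sqrt a * Complex.exp (-(ψ * Complex.I)) := by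
    rw [hstar, hα, map_mul, Complex.conj_ofReal, ← Complex.exp_conj]
    simp
  have hAA' : A' = of fun i j => Complex.exp (-(2 * T * (r i * ψ)) * Complex.I) * A i j := by
    ext i j
    simp only [hA, hA', of_apply, ← Complex.exp_nat_mul]
    rw [mul_left_comm (Complex.exp _), ← Complex.exp_add]
    push_cast
    ring_nf
  have hdet : A'.det ≠ 0 := by
    rw [hAA', det_mul_column]
    exact mul_ne_zero (Finset.prod_ne_zero_iff.mpr fun i _ => Complex.exp_ne_zero _) h
  have hBA : φ B.det = (∏ i, ((a ^ (T * r i) : ℝ) : ℂ)) * A'.det := by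
    rw [RingHom.map_det, ← det_mul_column]
    congr 1
    ext i j
    simp only [hA', B, of_apply, RingHom.mapMatrix_apply, map_apply, map_mul, map_pow,
      map_intCast, hα, hsα, mul_pow, ← Complex.exp_nat_mul]
    have h1 : (Real.sqrt a : ℂ) ^ ((j.2 : ℕ) * r i) *
        (Real.sqrt a : ℂ) ^ ((2 * T - (j.2 : ℕ)) * r i) = ((a ^ (T * r i) : ℝ) : ℂ) := by
      have h2 : (j.2 : ℕ) * r i + (2 * T - (j.2 : ℕ)) * r i = 2 * (T * r i) := by
        rw [← add_mul, Nat.add_sub_cancel' (by omega), mul_assoc]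
      rw [← pow_add, h2, pow_mul, ← Complex.ofReal_pow, Real.sq_sqrt ha.le, Complex.ofReal_pow]
    have h3 : Complex.exp (2 * ((j.2 : ℤ) - T : ℤ) * (r i * ψ) * Complex.I) =
        Complex.exp (((j.2 : ℕ) * r i : ℕ) * (ψ * Complex.I)) *
          Complex.exp (((2 * T - (j.2 : ℕ)) * r i : ℕ) * (-(ψ * Complex.I))) := by
      rw [← Complex.exp_add]
      congr 1
      have h4 : ((2 * T - (j.2 : ℕ) : ℕ) : ℂ) = 2 * T - (j.2 : ℕ) := by
        rw [Nat.cast_sub (by omega)]; push_cast; rfl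
      rw [Nat.cast_mul, Nat.cast_mul, h4]
      push_cast
      ring
    rw [h3, ← h1]
    ring
  have hpos : 0 < Complex.normSq (φ B.det) := by
    rw [Complex.normSq_pos, hBA]
    refine mul_ne_zero (Finset.prod_ne_zero_iff.mpr fun i _ => ?_) hdet
    exact Complex.ofReal_ne_zero.mpr (pow_ne_zero _ ha.ne')
  have hone : 1 ≤ ‖φ B.det‖ := by
    rw [hnorm, Int.cast_pos] at hpos
    rw [← one_le_sq_iff₀ (norm_nonneg _), ← Complex.normSq_eq_norm_sq, hnorm]
    exact_mod_cast hpos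
  rw [hBA, norm_mul, norm_prod] at hone
  refine hone.trans_eq ?_
  congr 1
  refine Finset.prod_congr rfl fun i _ => ?_
  rw [Complex.norm_real, Real.norm_of_nonneg (by positivity)]

theorem abs_le_abs_sin_mul_pi_div_two {η : ℝ} (hη : |η| ≤ 1) : |η| ≤ |Real.sin (Real.pi * η / 2)| := by
  have h := Real.mul_abs_le_abs_sin (x := Real.pi * η / 2) (by
    rw [abs_div, abs_mul, abs_of_pos Real.pi_pos, abs_two]
    nlinarith [Real.pi_pos])
  rw [abs_div, abs_mul, abs_of_pos Real.pi_pos, abs_two] at h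
  refine le_trans (le_of_eq ?_) h
  field_simp

theorem abs_cos_add_half {η : ℝ} (m : ℤ) :
    |Real.cos (Real.pi * ((2 * m + 1 : ℤ) + η) / 2)| = |Real.sin (Real.pi * η / 2)| := by
  rw [show Real.pi * ((2 * m + 1 : ℤ) + η) / 2 = Real.pi * η / 2 + m * Real.pi + Real.pi / 2 by
    push_cast; ring, Real.cos_add_pi_div_two, Real.sin_add_int_mul_pi, abs_neg, abs_mul, abs_zpow]
  simp

theorem exists_angle {β : ℂ} {a : ℝ} {ℓ : ℕ} (hβ : Complex.normSq β = a) (ha : 2 ^ 30 ≤ a)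
    (hre : 1 ≤ β.re) (hℓ : 3 ≤ ℓ) (hpow : (β ^ ℓ).re ^ 2 ≤ a) :
    ∃ (ψ η : ℝ) (M : ℤ), β = Real.sqrt a * Complex.exp (ψ * Complex.I) ∧ |ψ| ≤ Real.pi / 2 ∧
      2 * ℓ * ψ = Real.pi * (M + η) ∧ |η| ≤ 1 ∧ |η| * 2 ^ (15 * (ℓ - 1)) ≤ 1 ∧ ¬ (ℓ : ℤ) ∣ M := by
  have hπ := Real.pi_pos
  have ha0 : 0 < a := lt_of_lt_of_le (by positivity) ha
  have hnorm : ‖β‖ = Real.sqrt a := by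
    rw [← hβ, Complex.normSq_eq_norm_sq, Real.sqrt_sq (norm_nonneg _)]
  have hexp : β = Real.sqrt a * Complex.exp (β.arg * Complex.I) := by
    rw [← hnorm, Complex.norm_mul_exp_arg_mul_I]
  set ψ := β.arg with hψdef
  have hψ : |ψ| ≤ Real.pi / 2 := Complex.abs_arg_le_pi_div_two_iff.mpr (by linarith)
  set m : ℤ := ⌊ℓ * ψ / Real.pi⌋ with hm
  set η : ℝ := 2 * ℓ * ψ / Real.pi - (2 * m + 1 : ℤ) with hη
  have hM : 2 * ℓ * ψ = Real.pi * ((2 * m + 1 : ℤ) + η) := by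
    rw [hη]; field_simp; ring
  have hη1 : |η| ≤ 1 := by
    have h1 := Int.floor_le (ℓ * ψ / Real.pi)
    have h2 := (Int.lt_floor_add_one (ℓ * ψ / Real.pi)).le
    have h3 : 2 * ℓ * ψ / Real.pi = 2 * (ℓ * ψ / Real.pi) := by ring
    rw [abs_le, hη, h3]
    push_cast
    constructor <;> linarith
  have hre1 : β.re ^ 2 = a * Real.cos ψ ^ 2 := by
    conv_lhs => rw [hexp]
    rw [Complex.re_ofReal_mul, Complex.exp_ofReal_mul_I_re, mul_pow, Real.sq_sqrt ha0.le]
  have hre2 : (β ^ ℓ).re ^ 2 = a ^ ℓ * Real.cos (ℓ * ψ) ^ 2 := by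
    conv_lhs => rw [hexp]
    rw [mul_pow, ← Complex.exp_nat_mul, ← Complex.ofReal_pow, ← mul_assoc, ← Complex.ofReal_natCast,
      ← Complex.ofReal_mul, Complex.re_ofReal_mul, Complex.exp_ofReal_mul_I_re, mul_pow,
      ← pow_mul, mul_comm ℓ 2, pow_mul, Real.sq_sqrt ha0.le]
  have hcos : |η| ≤ |Real.cos (ℓ * ψ)| := by
    rw [show (ℓ : ℝ) * ψ = Real.pi * ((2 * m + 1 : ℤ) + η) / 2 by linarith, abs_cos_add_half]
    exact abs_le_abs_sin_mul_pi_div_two hη1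
  have hsq : a ^ (ℓ - 1) * η ^ 2 ≤ 1 := by
    refine le_of_mul_le_mul_left ?_ ha0
    rw [mul_one, ← mul_assoc, ← pow_succ', Nat.sub_add_cancel (by omega)]
    refine le_trans ?_ (hre2 ▸ hpow)
    gcongr a ^ ℓ * ?_
    exact sq_le_sq.mpr hcos
  have hηsmall : |η| * 2 ^ (15 * (ℓ - 1)) ≤ 1 := by
    rw [← sq_le_one_iff₀ (by positivity), mul_pow, sq_abs, ← pow_mul, mul_right_comm, pow_mul,
      mul_comm]
    refine le_trans ?_ hsq
    gcongr
    exact le_trans (by norm_num) ha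
  refine ⟨ψ, η, 2 * m + 1, hexp, hψ, hM, hη1, hηsmall, ?_⟩
  rintro ⟨k, hk⟩
  have hℓ' : (3 : ℝ) ≤ ℓ := by exact_mod_cast hℓ
  have hkR : ((2 * m + 1 : ℤ) : ℝ) = ℓ * k := by exact_mod_cast hk
  have hk1 : |k| ≤ 1 := by
    have h1 : |((2 * m + 1 : ℤ) : ℝ)| ≤ ℓ + 1 := by
      have h2 : ((2 * m + 1 : ℤ) : ℝ) = 2 * ℓ * ψ / Real.pi - η := by rw [hη]; ring
      have h3 : |2 * ℓ * ψ / Real.pi| ≤ ℓ := by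
        rw [abs_div, abs_mul, abs_of_pos hπ, abs_of_pos (by linarith : (0 : ℝ) < 2 * ℓ),
          div_le_iff₀ hπ]
        nlinarith
      rw [h2]
      exact (abs_sub _ _).trans (add_le_add h3 hη1)
    rw [hkR, abs_mul, Nat.abs_cast] at h1
    have h4 : |(k : ℝ)| < 2 := by nlinarith
    have h5 : |k| < 2 := by exact_mod_cast h4
    omega
  have hk0 : k ≠ 0 := by rintro rfl; omega
  have hcosψ : |Real.cos ψ| ≤ |η| := by
    have h1 : ψ = k * (Real.pi / 2) + Real.pi * η / (2 * ℓ) := by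
      rw [hkR] at hM
      field_simp
      linarith
    have h2 : |Real.cos ψ| = |Real.sin (Real.pi * η / (2 * ℓ))| := by
      rcases (abs_le.mp hk1) with ⟨h3, h4⟩
      have : k = 1 ∨ k = -1 := by omega
      rcases this with rfl | rfl
      · rw [h1, Int.cast_one, one_mul, add_comm, Real.cos_add_pi_div_two, abs_neg]
      · rw [h1, Int.cast_neg, Int.cast_one, neg_one_mul, neg_add_eq_sub, Real.cos_sub_pi_div_two]
    rw [h2]
    refine Real.abs_sin_le_abs.trans ?_
    rw [abs_div, abs_mul, abs_of_pos hπ, abs_of_pos (by linarith : (0 : ℝ) < 2 * ℓ),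
      div_le_iff₀ (by linarith)]
    nlinarith [abs_nonneg η, Real.pi_le_four]
  have h1 : 1 ≤ a * η ^ 2 := by
    calc (1 : ℝ) ≤ β.re ^ 2 := one_le_pow₀ hre
      _ = a * Real.cos ψ ^ 2 := hre1
      _ ≤ a * η ^ 2 := by gcongr a * ?_; exact sq_le_sq.mpr hcosψ
  have h2 : a * (a * η ^ 2) ≤ 1 := by
    refine le_trans ?_ hsq
    rw [← mul_assoc, ← sq]
    gcongr
    · exact le_trans (by norm_num) ha
    · omega
  nlinarith

theorem cubic_le_two_pow {T : ℕ} (hT : 21 ≤ T) :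
    2304 * T ^ 3 + 1152 * T ^ 2 + 4 * T + 30 ≤ 15 * 2 ^ T := by
  induction T, hT using Nat.le_induction with
  | base => norm_num
  | succ T hT ih =>
    rw [pow_succ]
    have h1 : 21 * T ≤ T ^ 2 := by nlinarith
    have h2 : 21 * T ^ 2 ≤ T ^ 3 := by nlinarith
    ring_nf at ih ⊢
    omega

theorem two_mul_sum_fin_add (K : ℕ) : 2 * ∑ k : Fin K, (k : ℕ) + K = K ^ 2 := by
  induction K with
  | zero => simp
  | succ K ih =>
    rw [Fin.sum_univ_castSucc]
    simp only [Fin.val_castSucc, Fin.val_last]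
    linarith

theorem sum_natAbs_sub (T : ℕ) :
    ∑ l : Fin (2 * T + 1), ((l : ℤ) - T).natAbs = T * (T + 1) := by
  rw [← Finset.sum_range fun l => ((l : ℤ) - T).natAbs]
  induction T with
  | zero => simp
  | succ T ih =>
    rw [show 2 * (T + 1) + 1 = 2 * T + 1 + 1 + 1 by ring, Finset.sum_range_succ',
      Finset.sum_range_succ, Finset.sum_congr rfl fun l _ => show
        (((l + 1 : ℕ) : ℤ) - (T + 1 : ℕ)).natAbs = ((l : ℤ) - T).natAbs by omega, ih,
      show (((2 * T + 1 + 1 : ℕ) : ℤ) - (T + 1 : ℕ)).natAbs = T + 1 by omega,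
      show (((0 : ℕ) : ℤ) - (T + 1 : ℕ)).natAbs = T + 1 by omega]
    ring

theorem prod_interpolation_bound (T K b B : ℕ) :
    ∏ j : Fin K × Fin (2 * T + 1),
      (2 * (2 ^ b) ^ (j.1 : ℕ) * (2 ^ (41 * B)) ^ ((j.2 : ℤ) - T).natAbs : ℝ) =
    2 ^ (K * (2 * T + 1) + b * (2 * T + 1) * ∑ k : Fin K, (k : ℕ) + 41 * B * K * (T * (T + 1))) := by
  rw [Finset.prod_mul_distrib, Finset.prod_mul_distrib, Finset.prod_const,
    Finset.prod_pow_eq_pow_sum, Finset.prod_pow_eq_pow_sum, Fintype.sum_prod_type,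
    Fintype.sum_prod_type]
  simp only [Finset.sum_const, Finset.card_univ, Fintype.card_prod, Fintype.card_fin, smul_eq_mul,
    ← Finset.mul_sum, ← pow_mul, ← pow_add, sum_natAbs_sub]
  ring_nf

theorem exponent_lt {T N σ P K : ℕ} (hT : 21 ≤ T) (hK : K = 180 * T ^ 2) (hN : N = K * (2 * T + 1))
    (hσ : 2 * σ + K = K ^ 2) (hP : 2 * P + N = N ^ 2) :
    6 * (2 * T * (T * (31 * (2 * T + 1)) * N) + (2 * T * N + (N + (2 * T - 5) * (2 * T + 1) * σ +
      41 * (31 * (2 * T + 1) + 2 * (3 * T ^ 2)) * K * (T * (T + 1))))) < 19 * P := by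
  obtain ⟨t, rfl⟩ := Nat.exists_eq_add_of_le hT
  rw [show 2 * (21 + t) - 5 = 37 + 2 * t by omega]
  zify at *
  have hσ' : (σ : ℤ) * 2 = K ^ 2 - K := by linear_combination hσ
  have hP' : (P : ℤ) * 2 = N ^ 2 - N := by linear_combination hP
  have key : 0 < 19 * ((N : ℤ) ^ 2 - N) - 6 * (2 * (2 * (21 + t) * ((21 + t) *
      (31 * (2 * (21 + t) + 1)) * N) + 2 * (21 + t) * N + N) +
      (37 + 2 * t) * (2 * (21 + t) + 1) * (K ^ 2 - K) + 2 * (41 * (31 * (2 * (21 + t) + 1) +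
        2 * (3 * (21 + t) ^ 2)) * K * ((21 + t) * (21 + t + 1)))) := by
    rw [hN, hK]
    ring_nf
    positivity
  linarith [congrArg (fun x : ℤ => (37 + 2 * (t : ℤ)) * (2 * (21 + t) + 1) * x) hσ']

theorem interpolation_bounds_contra {T K N a : ℕ} {D : ℝ} {r : Fin K × Fin (2 * T + 1) → ℕ}
    (hT : 21 ≤ T) (hK : K = 180 * T ^ 2) (hN : N = K * (2 * T + 1)) (ha' : a ≤ 2 ^ (2 * T))
    (hRK : (31 * (2 * T + 1)) * K ≤ 2 ^ (2 * T)) (hr : ∀ i, r i ≤ 31 * (2 * T + 1))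
    (hlow : 1 ≤ (∏ i, (a : ℝ) ^ (T * r i)) * D)
    (hup : D * 9 ^ (N * (N - 1) / 2) ≤ N.factorial *
      2 ^ (K * (2 * T + 1) + (2 * T - 5) * (2 * T + 1) * ∑ k : Fin K, (k : ℕ) +
        41 * (31 * (2 * T + 1) + 2 * (3 * T ^ 2)) * K * (T * (T + 1)))) : False := by
  have hσ := two_mul_sum_fin_add K
  generalize ∑ k : Fin K, (k : ℕ) = σ at *
  have hD0 : 0 ≤ D := by
    by_contra! h
    have : (∏ i, (a : ℝ) ^ (T * r i)) * D ≤ 0 :=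
      mul_nonpos_of_nonneg_of_nonpos (by positivity) h.le
    linarith
  have hrow : ∏ i, (a : ℝ) ^ (T * r i) ≤ 2 ^ (2 * T * (T * (31 * (2 * T + 1)) * N)) := by
    calc ∏ i, (a : ℝ) ^ (T * r i)
        ≤ ∏ i : Fin K × Fin (2 * T + 1), (2 ^ (2 * T)) ^ (T * (31 * (2 * T + 1))) := by
          refine Finset.prod_le_prod (fun _ _ => by positivity) fun i _ => ?_
          have h : (a : ℝ) ≤ 2 ^ (2 * T) := by exact_mod_cast ha'
          refine (pow_le_pow_left₀ (by positivity) h _).trans ?_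
          exact pow_le_pow_right₀ (one_le_pow₀ one_le_two) (Nat.mul_le_mul_left _ (hr i))
      _ = _ := by
          rw [Finset.prod_const, Finset.card_univ, Fintype.card_prod, Fintype.card_fin,
            Fintype.card_fin, ← hN, ← pow_mul, ← pow_mul, mul_assoc]
  have hfact : (N.factorial : ℝ) ≤ 2 ^ (2 * T * N) := by
    have h1 : N ≤ 2 ^ (2 * T) := by
      rw [hN, mul_comm]
      refine le_trans (Nat.mul_le_mul_right _ ?_) hRK
      omega
    calc (N.factorial : ℝ) ≤ (N : ℝ) ^ N := by exact_mod_cast N.factorial_le_pow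
      _ ≤ (2 ^ (2 * T)) ^ N := by
        gcongr
        exact_mod_cast h1
      _ = _ := by rw [← pow_mul]
  have hP : 2 * (N * (N - 1) / 2) + N = N ^ 2 := by
    rw [Nat.mul_div_cancel' (Nat.even_mul_pred_self N).two_dvd]
    cases N <;> simp
    ring
  generalize N * (N - 1) / 2 = P at *
  have hlt := exponent_lt hT hK hN hσ hP
  set e := K * (2 * T + 1) + (2 * T - 5) * (2 * T + 1) * σ +
    41 * (31 * (2 * T + 1) + 2 * (3 * T ^ 2)) * K * (T * (T + 1)) with he
  have hfinal : (9 : ℝ) ^ P ≤ 2 ^ (2 * T * (T * (31 * (2 * T + 1)) * N) + (2 * T * N + e)) := by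
    calc (9 : ℝ) ^ P = 1 * 9 ^ P := (one_mul _).symm
      _ ≤ (2 ^ (2 * T * (T * (31 * (2 * T + 1)) * N)) * D) * 9 ^ P := by
        gcongr
        exact hlow.trans (by gcongr)
      _ = 2 ^ (2 * T * (T * (31 * (2 * T + 1)) * N)) * (D * 9 ^ P) := by ring
      _ ≤ 2 ^ (2 * T * (T * (31 * (2 * T + 1)) * N)) * (2 ^ (2 * T * N) * 2 ^ e) := by
        refine mul_le_mul_of_nonneg_left (hup.trans ?_) (by positivity)
        gcongr
      _ = _ := by rw [← pow_add, ← pow_add]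
  have hfinal' : 9 ^ P ≤ 2 ^ (2 * T * (T * (31 * (2 * T + 1)) * N) + (2 * T * N + e)) := by
    exact_mod_cast hfinal
  have h1 : 2 ^ (19 * P) ≤ 2 ^ (6 * (2 * T * (T * (31 * (2 * T + 1)) * N) + (2 * T * N + e))) := by
    calc 2 ^ (19 * P) ≤ (9 ^ P) ^ 6 := by
          rw [pow_mul, ← pow_mul 9, mul_comm P, pow_mul 9]
          exact Nat.pow_le_pow_left (by norm_num) _
      _ ≤ _ := by
          rw [mul_comm 6, pow_mul]
          gcongr
  rw [Nat.pow_le_pow_iff_right (by norm_num)] at h1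
  rw [he, ← hN] at h1
  omega

theorem re_sq_pow_gt {d : ℤ} (hd : d < 0) {α : ℤ√d} {ℓ T a : ℕ} (hu : 1 ≤ α.re)
    (hnorm : α.norm = a) (hℓ : ℓ.Prime) (hT : 21 ≤ T) (hℓT : 2 ^ (T - 1) ≤ ℓ) (hℓT' : ℓ ≤ 2 ^ T)
    (ha : 2 ^ 30 ≤ a) (ha' : a ≤ 2 ^ (2 * T)) : (a : ℤ) < (α ^ ℓ).re ^ 2 := by
  by_contra! hre
  have hcub := cubic_le_two_pow hT
  have h2T : 2 ^ T = 2 * 2 ^ (T - 1) := by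
    rw [← pow_succ', Nat.sub_add_cancel (by omega)]
  have hT2 : 21 * T ≤ T ^ 2 := by nlinarith
  have hT3 : 21 * T ^ 2 ≤ T ^ 3 := by nlinarith
  have hℓR : 2 * T + 1 + 30 * (2 * T + 1) ≤ ℓ := by omega
  obtain ⟨φ, hφre, hφstar, hφnorm⟩ := Zsqrtd.exists_ringHom_complex hd
  obtain ⟨ψ, η, M, hexp, hψ, hM, hη1, hη, hMℓ⟩ := exists_angle (β := φ α) (a := a) (ℓ := ℓ)
    (by rw [hφnorm, hnorm]; rfl) (by exact_mod_cast ha) (by rw [hφre]; exact_mod_cast hu)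
    (by omega) (by rw [← map_pow, hφre]; exact_mod_cast hre)
  have hRK : (31 * (2 * T + 1)) * (180 * T ^ 2) ≤ 2 ^ (2 * T) := by
    have h1 : 150 * T ^ 3 ≤ 2 ^ T := by omega
    calc (31 * (2 * T + 1)) * (180 * T ^ 2) ≤ (150 * T ^ 3) * (150 * T ^ 3) :=
          Nat.mul_le_mul (by nlinarith) (by nlinarith)
      _ ≤ 2 ^ T * 2 ^ T := by gcongr
      _ = _ := by rw [← pow_add, two_mul]
  have hN9 : 9 ^ (180 * T ^ 2 * (2 * T + 1)) ≤ 2 ^ (576 * T ^ 2 * (2 * T + 1)) := by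
    rw [show 180 * T ^ 2 * (2 * T + 1) = 5 * (36 * T ^ 2 * (2 * T + 1)) by ring,
      show 576 * T ^ 2 * (2 * T + 1) = 16 * (36 * T ^ 2 * (2 * T + 1)) by ring, pow_mul, pow_mul 2]
    exact Nat.pow_le_pow_left (by norm_num) _
  have hη2 : (9 : ℝ) ^ (180 * T ^ 2 * (2 * T + 1)) *
      ((31 * (2 * T + 1) : ℕ) * |η| * (180 * T ^ 2 : ℕ)) ≤ 1 := by
    have h1 : 9 ^ (180 * T ^ 2 * (2 * T + 1)) * ((31 * (2 * T + 1)) * (180 * T ^ 2)) ≤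
        2 ^ (15 * (ℓ - 1)) := by
      refine (Nat.mul_le_mul hN9 hRK).trans ?_
      rw [← pow_add]
      refine Nat.pow_le_pow_right (by norm_num) ?_
      ring_nf at hcub h2T ⊢
      omega
    have h2 : (9 : ℝ) ^ (180 * T ^ 2 * (2 * T + 1)) *
        ((31 * (2 * T + 1) : ℕ) * (180 * T ^ 2 : ℕ)) ≤ 2 ^ (15 * (ℓ - 1)) := by exact_mod_cast h1
    calc (9 : ℝ) ^ (180 * T ^ 2 * (2 * T + 1)) *
          ((31 * (2 * T + 1) : ℕ) * |η| * (180 * T ^ 2 : ℕ))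
        = |η| * (9 ^ (180 * T ^ 2 * (2 * T + 1)) *
          ((31 * (2 * T + 1) : ℕ) * (180 * T ^ 2 : ℕ))) := by ring
      _ ≤ |η| * 2 ^ (15 * (ℓ - 1)) := by gcongr
      _ ≤ 1 := hη
  have hη3 : (2 * T + 1 + 30 * (2 * T + 1) : ℕ) * |η| < 1 := by
    rw [show 2 * T + 1 + 30 * (2 * T + 1) = 31 * (2 * T + 1) by ring]
    have h1 : (1 : ℝ) ≤ 9 ^ (180 * T ^ 2 * (2 * T + 1)) := one_le_pow₀ (by norm_num)
    have h2 : (2 : ℝ) ≤ (180 * T ^ 2 : ℕ) := by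
      norm_cast
      nlinarith
    have h3 : (0 : ℝ) ≤ (31 * (2 * T + 1) : ℕ) * |η| := by positivity
    have h4 : 1 * (((31 * (2 * T + 1) : ℕ) * |η|) * 2) ≤ (1 : ℝ) := by
      refine le_trans ?_ hη2
      gcongr
    linarith
  obtain ⟨r, s, hr, hs, hinj, hdet⟩ := exists_interpolation_det_ne_zero (L := 2 * T + 1)
    (K := 180 * T ^ 2) (R := 30 * (2 * T + 1)) (S₀ := 3 * T ^ 2) hℓ hMℓ hM hℓR hη3 (by
      ring_nf
      omega)
  replace hr (i) : r i ≤ 31 * (2 * T + 1) := (hr i).trans_eq (by ring)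
  have hlow := one_le_pow_mul_norm_det φ hφstar hφnorm (by positivity) hexp _ _ hdet
  have hb : 9 * ℓ * (31 * (2 * T + 1) + 2 * (3 * T ^ 2)) ≤ 2 ^ (2 * T - 5) := by
    have h1 : 2 ^ T = 2 ^ (T - 5) * 32 := by
      rw [show 32 = 2 ^ 5 by norm_num, ← pow_add, Nat.sub_add_cancel (by omega)]
    have h2 : 9 * (31 * (2 * T + 1) + 2 * (3 * T ^ 2)) ≤ 2 ^ (T - 5) := by omega
    calc _ = ℓ * (9 * (31 * (2 * T + 1) + 2 * (3 * T ^ 2))) := by ring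
      _ ≤ 2 ^ T * 2 ^ (T - 5) := Nat.mul_le_mul hℓT' h2
      _ = _ := by rw [← pow_add]; congr 1; omega
  have hup := norm_det_interpolation_le hψ hM hη1 hℓ.pos hb hη2 r s hr hs hinj
  rw [prod_interpolation_bound] at hup
  exact interpolation_bounds_contra hT rfl rfl ha' hRK hr hlow hup

end

namespace Zsqrtd

theorem im_dvd_im_pow {d : ℤ} (α : ℤ√d) (m : ℕ) : α.im ∣ (α ^ m).im := by
  induction m with
  | zero => simp
  | succ m ih =>
    rw [pow_succ, im_mul]
    exact (Dvd.intro_left _ rfl).add (ih.mul_right _)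

theorem re_dvd_re_pow {d : ℤ} (α : ℤ√d) {m : ℕ} (hm : Odd m) : α.re ∣ (α ^ m).re := by
  obtain ⟨k, rfl⟩ := hm
  induction k with
  | zero => simp
  | succ k ih =>
    have h : (α ^ 2).im = α.re * (2 * α.im) := by
      rw [pow_two, im_mul]
      ring
    rw [show 2 * (k + 1) + 1 = (2 * k + 1) + 2 by ring, pow_add, re_mul, h]
    exact (ih.mul_right _).add ⟨d * (α ^ (2 * k + 1)).im * (2 * α.im), by ring⟩

theorem norm_dvd_re_pow_sub {d : ℤ} (α : ℤ√d) (m : ℕ) :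
    α.norm ∣ (α ^ (m + 1)).re - (2 * α.re) ^ m * α.re := by
  have h : (α.norm : ℤ√d) ∣ α ^ (m + 1) - ((2 * α.re) ^ m : ℤ) * α := by
    induction m with
    | zero => simp
    | succ m ih =>
      have h2 : α ^ 2 = (2 * α.re : ℤ) * α - (α.norm : ℤ√d) := by
        ext <;> simp [pow_two, norm_def] <;> ring
      have : α ^ (m + 1 + 1) - ((2 * α.re) ^ (m + 1) : ℤ) * α =
          (α ^ (m + 1) - ((2 * α.re) ^ m : ℤ) * α) * α - (α.norm : ℤ√d) * ((2 * α.re) ^ m : ℤ) := by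
        push_cast at h2 ⊢
        linear_combination (2 * (α.re : ℤ√d)) ^ m * h2
      rw [this]
      exact (ih.mul_right _).sub (Dvd.intro _ rfl)
  have := ((intCast_dvd _ _).1 h).1
  rwa [re_sub, re_mul, re_intCast, im_intCast, mul_zero, zero_mul, add_zero] at this

end Zsqrtd

theorem pow_pred_dvd_of_pow_dvd {p q m j : ℕ} (hp : p.Prime) (hp2 : Odd p)
    (hw : 2 ^ (p - 1) ≡ 1 [MOD p ^ 2]) (hq : ¬ q ^ (p - 1) ≡ 1 [MOD p ^ 2]) (hpq : ¬ p ∣ q)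
    (h : ((p ^ j : ℕ) : ℤ) ∣ (4 * q) ^ (2 * m) - 1) : p ^ (j - 1) ∣ m := by
  have : Fact p.Prime := ⟨hp⟩
  have hp4 : ¬ p ∣ 2 := fun h => by
    have := (Nat.prime_dvd_prime_iff_eq hp Nat.prime_two).1 h
    subst this
    exact absurd hp2 (by decide)
  have hcop : ¬ p ∣ 4 * q := by
    rw [show 4 * q = 2 * (2 * q) by ring, hp.dvd_mul, hp.dvd_mul]
    tauto
  have h4 : (4 * q) ^ (p - 1) ≡ q ^ (p - 1) [MOD p ^ 2] := by
    have := (hw.mul hw).mul_right (q ^ (p - 1))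
    rwa [← mul_pow, ← mul_pow, one_mul, one_mul] at this
  have h1 : (p : ℤ) ∣ (4 * q) ^ (p - 1) - 1 := by
    have := Int.ModEq.pow_card_sub_one_eq_one hp (n := 4 * q) (by
      rw [Int.isCoprime_iff_gcd_eq_one]
      have := (Nat.Prime.coprime_iff_not_dvd hp).2 hcop
      rw [Nat.coprime_comm] at this
      exact_mod_cast this)
    exact this.symm.dvd
  have h2 : ¬ (p : ℤ) ^ 2 ∣ (4 * q) ^ (p - 1) - 1 := fun h => by
    refine hq (h4.symm.trans ?_)
    rw [← Int.natCast_modEq_iff]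
    exact (Int.modEq_of_dvd (by push_cast; exact h)).symm
  have hm1 : emultiplicity (p : ℤ) ((4 * q) ^ (p - 1) - 1) = 1 := by
    have := emultiplicity_eq_coe (a := (p : ℤ)) (b := (4 * q) ^ (p - 1) - 1) (n := 1)
    exact_mod_cast this.2 ⟨by simpa using h1, h2⟩
  have hl := Int.emultiplicity_pow_sub_pow hp hp2 (x := (4 * q) ^ (p - 1)) (y := 1) h1
    (fun h => hcop (by exact_mod_cast Int.Prime.dvd_pow' hp h)) (2 * m)
  rw [one_pow, hm1] at hl
  have hdvd : (p : ℤ) ^ j ∣ ((4 * q) ^ (p - 1)) ^ (2 * m) - 1 := by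
    have := h.trans (sub_dvd_pow_sub_pow (((4 * q) ^ (2 * m) : ℤ)) 1 (p - 1))
    rw [one_pow, ← pow_mul, mul_comm (2 * m), pow_mul] at this
    exact_mod_cast this
  have hj := le_emultiplicity_of_pow_dvd hdvd
  rw [hl] at hj
  have h3 : ((j - 1 : ℕ) : ℕ∞) ≤ emultiplicity p (2 * m) := by
    push_cast
    exact tsub_le_iff_left.2 hj
  exact Nat.Coprime.dvd_of_dvd_mul_left
    (Nat.Coprime.pow_left _ ((Nat.Prime.coprime_iff_not_dvd hp).2 hp4))
    (pow_dvd_of_le_emultiplicity h3)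

theorem re_sq_pow_lt_of_pow_dvd {p q ℓ j : ℕ} {d : ℤ} (hp : p.Prime) (hmod : p % 4 = 1)
    (hw : 2 ^ (p - 1) ≡ 1 [MOD p ^ 2]) (hq : q.Prime) (hqp : q ∣ p - 2) (hd : d < 0) {α : ℤ√d}
    (hre : α.re = 2 * q) (him : α.im ≠ 0) (hnorm : α.norm = (p ^ j : ℕ)) (hj : 2 ≤ j)
    (hℓ : ℓ.Prime) (hℓ2 : ℓ ≠ 2) (hdvd : p ^ (j - 1) ∣ ℓ - 1) :
    ((p ^ j : ℕ) : ℤ) < (α ^ ℓ).re ^ 2 := by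
  have hq0 := hq.pos
  have hp1 := hp.one_lt
  have hℓ1 := hℓ.one_lt
  have hpo : Odd p := Nat.odd_iff.2 (by omega)
  have h2 : 2 * p ^ (j - 1) ≤ ℓ - 1 := by
    refine Nat.le_of_dvd (by omega) (Nat.Coprime.mul_dvd_of_dvd_of_dvd ?_ ?_ hdvd)
    · exact (Nat.coprime_two_left).2 hpo.pow
    · exact (hℓ.even_sub_one hℓ2).two_dvd
  have hgt : 4 * q ^ 2 < p ^ j := by
    rw [Zsqrtd.norm_def, hre] at hnorm
    have : 0 < α.im * α.im := mul_self_pos.2 him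
    zify
    push_cast at hnorm
    nlinarith
  have hbound : 2 ^ 19 ≤ p ^ (j - 1) ∧ 2 ^ 30 ≤ p ^ j := by
    rcases lt_or_ge p 524288 with hlt | hge
    · obtain rfl : p = 1093 := eq_1093_of_wieferich hmod hp.ne_one hlt (by
        have := hw
        rwa [Nat.ModEq, Nat.mod_eq_of_lt (a := 1) (by nlinarith)] at this)
      obtain rfl : q = 1091 := (Nat.prime_dvd_prime_iff_eq hq (by norm_num)).1 hqp
      have hj3 : 3 ≤ j := by
        by_contra! h
        obtain rfl : j = 2 := by omega
        norm_num at hgt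
      have h3 := Nat.pow_le_pow_right (n := 1093) (by norm_num) hj3
      have h4 := Nat.pow_le_pow_right (n := 1093) (by norm_num) (show 2 ≤ j - 1 by omega)
      constructor <;> omega
    · have h3 := Nat.pow_le_pow_right hp.pos hj
      have h4 := Nat.pow_le_pow_right hp.pos (show 1 ≤ j - 1 by omega)
      constructor
      · rw [pow_one] at h4
        omega
      · nlinarith
  have hsq : p ^ j ≤ (p ^ (j - 1)) ^ 2 := by
    rw [← pow_mul]
    exact Nat.pow_le_pow_right hp.pos (by omega)
  have hlog : 20 ≤ Nat.log 2 ℓ := Nat.le_log_of_pow_le (by norm_num) (by omega)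
  have hℓT := (Nat.lt_pow_succ_log_self (b := 2) (by norm_num) ℓ).le
  refine re_sq_pow_gt hd (T := Nat.log 2 ℓ + 1) (by omega) hnorm hℓ (by omega) ?_ hℓT hbound.2 ?_
  · exact Nat.pow_log_le_self 2 (by omega)
  · rw [mul_comm, pow_mul]
    exact hsq.trans (Nat.pow_le_pow_left (by omega) 2)

theorem natCast_pow_pred_modEq_one {p q ℓ : ℕ} {w ε : ℤ} (hpo : Odd p)
    (hw : 2 ^ (p - 1) ≡ 1 [MOD p ^ 2]) (hε : ε = 1 ∨ ε = -1) (hw1 : w = 1 ∨ w = -1)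
    (h : (4 * w) ^ ℓ ≡ ε * (4 * q) [ZMOD (p ^ 2 : ℕ)]) : q ^ (p - 1) ≡ 1 [MOD p ^ 2] := by
  have hev : Even (p - 1) := Nat.Odd.sub_odd hpo odd_one
  have hone {x : ℤ} (hx : x = 1 ∨ x = -1) : x ^ (p - 1) = 1 := by
    rcases hx with rfl | rfl
    · simp
    · exact hev.neg_one_pow
  have hw4 : (4 : ℤ) ^ (p - 1) ≡ 1 [ZMOD (p ^ 2 : ℕ)] := by
    have : (4 : ℕ) ^ (p - 1) ≡ 1 [MOD p ^ 2] := by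
      have := hw.mul hw
      rwa [← mul_pow] at this
    exact_mod_cast (Int.natCast_modEq_iff.2 this)
  have h1 := h.pow (p - 1)
  rw [← pow_mul, mul_comm ℓ, pow_mul, mul_pow, mul_pow, mul_pow, hone hw1, hone hε, one_pow,
    mul_one, one_mul, mul_pow] at h1
  have h2 := (hw4.mul_right ((q : ℤ) ^ (p - 1))).symm.trans (h1.symm.trans (hw4.pow ℓ))
  rw [one_mul, one_pow] at h2
  rw [← Int.natCast_modEq_iff]
  exact_mod_cast h2

/-- Let `p` be a prime with `p ≡ 1 (mod 4)` and `2^(p−1) ≡ 1 (mod p^2)`, let `q1` be a prime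
factor of `p − 2` such that `q1^(p−1) ≢ 1 (mod p^2)`, let `n` be a composite number, let `d0`
be the squarefree part of `4·q1^2 − p^n` and `c` the positive integer with
`4·q1^2 − p^n = c^2·d0`. Then for any prime `p4` dividing `n`, there are no integers `u`, `v`
and sign `ε ∈ {1, −1}` such that `(u + v·√d0)^p4 = ε·(2·q1 + c·√d0)` in `ℤ[√d0]`. -/
theorem stmt_18 (p : ℕ) (hp : p.Prime) (hmod : p % 4 = 1)
    (hw : 2 ^ (p - 1) ≡ 1 [MOD p ^ 2])
    (q1 : ℕ) (hq1 : q1.Prime) (hq1dvd : q1 ∣ p - 2)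
    (hq1nw : ¬ (q1 ^ (p - 1) ≡ 1 [MOD p ^ 2]))
    (n : ℕ) (hcomp : 1 < n ∧ ¬ n.Prime)
    (d0 : ℤ) (hd0 : Squarefree d0) (c : ℤ) (hc : 0 < c)
    (hfac : 4 * (q1 : ℤ) ^ 2 - (p : ℤ) ^ n = c ^ 2 * d0)
    (p4 : ℕ) (hp4 : p4.Prime) (hdvd : p4 ∣ n) :
    ¬ ∃ (u v ε : ℤ), (ε = 1 ∨ ε = -1) ∧
      (⟨u, v⟩ : ℤ√d0) ^ p4 = (ε : ℤ√d0) * ⟨2 * (q1 : ℤ), c⟩ := by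
  rintro ⟨u, v, ε, hε, hα⟩
  obtain ⟨j, rfl⟩ := hdvd
  have hp2 := hp4.two_le
  have hpp := hp.two_le
  have hj : 2 ≤ j := by
    rcases j with _ | _ | j
    · simp at hcomp
    · simp [hp4] at hcomp
    · omega
  have hpo : Odd p := Nat.odd_iff.2 (by omega)
  have hqo : Odd q1 := Odd.of_dvd_nat (Nat.odd_iff.2 (by omega)) hq1dvd
  have hqle : q1 ≤ p - 2 := Nat.le_of_dvd (by omega) hq1dvd
  have hpq : ¬ p ∣ q1 := fun h => by
    have := Nat.le_of_dvd hq1.pos h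
    omega
  have hd : d0 < 0 := by
    have h1 : p ^ 4 ≤ p ^ (p4 * j) := Nat.pow_le_pow_right hp.pos (by nlinarith)
    have h2 : 4 * q1 ^ 2 < p ^ 4 := by
      have : q1 ^ 2 < p ^ 2 := Nat.pow_lt_pow_left (by omega) (by norm_num)
      have : 5 ^ 2 ≤ p ^ 2 := Nat.pow_le_pow_left (by omega) 2
      nlinarith
    have h3 : c ^ 2 * d0 < 0 := by
      rw [← hfac, sub_neg]
      exact_mod_cast h2.trans_le h1
    exact neg_of_mul_neg_right h3 (by positivity)
  have hodd : Odd (c ^ 2 * d0) := by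
    rw [← hfac]
    exact Even.sub_odd ⟨2 * q1 ^ 2, by ring⟩ (by exact_mod_cast hpo.pow)
  obtain ⟨hco, hdo⟩ := Int.odd_mul.1 hodd
  replace hco : Odd c := by simpa [Int.odd_pow] using hco
  have hre := congrArg Zsqrtd.re hα
  have him := congrArg Zsqrtd.im hα
  have hε2 : ε ^ 2 = 1 := by rcases hε with rfl | rfl <;> norm_num
  simp only [Zsqrtd.re_mul, Zsqrtd.im_mul, Zsqrtd.re_intCast, Zsqrtd.im_intCast, mul_zero,
    zero_mul, add_zero] at hre him
  have himo : Odd (ε * c) := Int.odd_mul.2 ⟨by rcases hε with rfl | rfl <;> decide, hco⟩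
  have hvo : Odd v := by
    obtain ⟨k, hk⟩ := Zsqrtd.im_dvd_im_pow (⟨u, v⟩ : ℤ√d0) p4
    rw [← him, hk] at himo
    exact (Int.odd_mul.1 himo).1
  rcases hp4.eq_two_or_odd' with rfl | hℓo
  · rw [← him, pow_two, Zsqrtd.im_mul] at himo
    exact absurd himo (Int.not_odd_iff_even.2 ⟨u * v, by ring⟩)
  have hnorm : (⟨u, v⟩ : ℤ√d0).norm = (p ^ j : ℕ) := by
    have h := congrArg Zsqrtd.normMonoidHom hα
    rw [map_pow, map_mul] at h
    refine hℓo.strictMono_pow.injective (h.trans ?_)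
    change Zsqrtd.norm _ * Zsqrtd.norm _ = _
    simp only [Zsqrtd.norm_def, Zsqrtd.re_intCast, Zsqrtd.im_intCast]
    push_cast
    rw [← pow_mul, mul_comm j]
    linear_combination (4 * (q1 : ℤ) ^ 2 - d0 * c ^ 2) * hε2 + hfac
  have hue : Even u := by
    by_contra h
    rw [Int.not_even_iff_odd] at h
    have h1 : Odd (u * u - d0 * v * v) := by
      have : u * u - d0 * v * v = (p ^ j : ℕ) := hnorm
      rw [this]
      exact_mod_cast hpo.pow
    exact Int.not_odd_iff_even.2 ((h.mul h).sub_odd ((hdo.mul hvo).mul hvo)) h1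
  obtain ⟨w, rfl⟩ := hue.two_dvd
  have hwq : w ∣ q1 := by
    have := Zsqrtd.re_dvd_re_pow (⟨2 * w, v⟩ : ℤ√d0) hℓo
    rw [hre, show ε * (2 * (q1 : ℤ)) = 2 * (ε * q1) by ring] at this
    have := (Int.mul_dvd_mul_iff_left two_ne_zero).1 this
    rcases hε with rfl | rfl <;> simpa using this
  have hcong := Zsqrtd.norm_dvd_re_pow_sub (⟨2 * w, v⟩ : ℤ√d0) (p4 - 1)
  rw [Nat.sub_add_cancel hp4.one_le, hre, hnorm] at hcong
  dsimp only at hcong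
  rcases (Nat.dvd_prime hq1).1 (Int.natAbs_dvd_natAbs.2 hwq) with h1 | h1
  · refine hq1nw (natCast_pow_pred_modEq_one hpo hw hε (Int.natAbs_eq_iff.1 h1) (ℓ := p4)
      (Int.modEq_of_dvd ?_))
    have h2 : ((p ^ 2 : ℕ) : ℤ) ∣ (p ^ j : ℕ) := by exact_mod_cast pow_dvd_pow p hj
    have h3 : ε * (4 * (q1 : ℤ)) - (4 * w) ^ p4 =
        (ε * (2 * q1) - (2 * (2 * w)) ^ (p4 - 1) * (2 * w)) * 2 := by
      rw [← Nat.sub_add_cancel hp4.one_le, pow_succ, Nat.add_sub_cancel]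
      ring
    rw [h3]
    exact (h2.trans hcong).mul_right _
  · obtain ⟨δ, hδ, hwδ⟩ : ∃ δ : ℤ, (δ = 1 ∨ δ = -1) ∧ w = δ * q1 := by
      rcases Int.natAbs_eq_iff.1 h1 with h | h
      · exact ⟨1, by simp, by simpa using h⟩
      · exact ⟨-1, by simp, by simpa using h⟩
    have hδ2 : δ ^ 2 = 1 := by rcases hδ with rfl | rfl <;> norm_num
    have hpow : ((p ^ j : ℕ) : ℤ) ∣ (4 * q1) ^ (2 * (p4 - 1)) - 1 := by
      have hev : Even (p4 - 1) := Nat.Odd.sub_odd hℓo odd_one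
      have hδp : δ ^ (p4 - 1) = 1 := by
        rcases hδ with rfl | rfl
        · simp
        · exact hev.neg_one_pow
      have h2 : ε * (2 * (q1 : ℤ)) - (2 * (2 * w)) ^ (p4 - 1) * (2 * w) =
          (2 * q1 : ℕ) * (ε - (4 * q1) ^ (p4 - 1) * δ) := by
        rw [hwδ, show 2 * (2 * (δ * (q1 : ℤ))) = δ * (4 * q1) by ring, mul_pow, hδp]
        push_cast
        ring
      have hcop : IsCoprime ((p ^ j : ℕ) : ℤ) (2 * q1 : ℕ) := by
        rw [Nat.isCoprime_iff_coprime]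
        exact Nat.Coprime.pow_left _ (Nat.Coprime.mul_right (Nat.coprime_two_right.2 hpo)
          ((Nat.Prime.coprime_iff_not_dvd hp).2 hpq))
      rw [h2] at hcong
      refine ((hcop.dvd_of_dvd_mul_left hcong).mul_left (-(ε + (4 * q1) ^ (p4 - 1) * δ))).trans
        (dvd_of_eq ?_)
      rw [mul_comm 2, pow_mul]
      linear_combination -hε2 + ((4 * (q1 : ℤ)) ^ (p4 - 1)) ^ 2 * hδ2
    have hlt := re_sq_pow_lt_of_pow_dvd (α := (δ : ℤ√d0) * ⟨2 * w, v⟩) hp hmod hw hq1 hq1dvd hd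
      (by
        simp only [Zsqrtd.re_mul, Zsqrtd.re_intCast, Zsqrtd.im_intCast, hwδ]
        linear_combination 2 * (q1 : ℤ) * hδ2)
      (by
        simp only [Zsqrtd.im_mul, Zsqrtd.re_intCast, Zsqrtd.im_intCast]
        have hv0 : v ≠ 0 := by
          rintro rfl
          exact absurd hvo (by decide)
        have hδ0 : δ ≠ 0 := by
          rintro rfl
          norm_num at hδ2
        simp [hv0, hδ0])
      (by
        rw [Zsqrtd.norm_mul, hnorm, Zsqrtd.norm_intCast, ← pow_two, hδ2, one_mul])
      hj hp4 (by rintro rfl; exact absurd hℓo (by decide))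
      (pow_pred_dvd_of_pow_dvd hp hpo hw hq1nw hpq hpow)
    rw [mul_pow, hα, ← Int.cast_pow, ← mul_assoc, ← Int.cast_mul] at hlt
    simp only [Zsqrtd.re_mul, Zsqrtd.re_intCast, Zsqrtd.im_intCast] at hlt
    have h5 : (δ ^ p4) ^ 2 = 1 := by rw [← pow_mul, mul_comm, pow_mul, hδ2, one_pow]
    have h6 : (2 * w) * (2 * w) - d0 * v * v = (p ^ j : ℕ) := hnorm
    have h7 : (δ ^ p4 * ε * (2 * (q1 : ℤ)) + d0 * 0 * c) ^ 2 = (2 * w) * (2 * w) := by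
      rw [hwδ]
      linear_combination 4 * (q1 : ℤ) ^ 2 * (ε ^ 2 * h5 + hε2 - hδ2)
    rw [h7] at hlt
    nlinarith [mul_self_nonneg v]
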